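/- arXiv:1710.00640 — 3 statements merged into one kernel-verified Lean document; each statement's English description precedes it below -/
import Mathlib

section
/- For any signs ε, δ ∈ {−1, +1}, the pair of functions r_{ε,δ} and r_{−ε,−δ} forms a complete set of continuous roots of the family of monic real quadratics: both functions are continuous, and for all (a₀, a₁) ∈ ℝ² and all z ∈ ℂ, z² + a₁z + a₀ = (z − r_{ε,δ}(a₀,a₁))·(z − r_{−ε,−δ}(a₀,a₁)). -/
/-- For signs `ε, δ ∈ {−1, +1}`, the root `r_{ε,δ}` of the monic real quadratic
`z² + a₁z + a₀`: it equals `−a₁/2 + ε·√(D)/2` when `D := a₁² − 4a₀ ≥ 0` and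
`−a₁/2 + δ·i·√(−D)/2` when `D < 0`. -/
noncomputable def rQuad (ε δ : ℝ) : ℝ × ℝ → ℂ := fun p =>
  if p.2 ^ 2 - 4 * p.1 ≥ 0 then
    -(p.2 : ℂ) / 2 + (ε : ℂ) * (Real.sqrt (p.2 ^ 2 - 4 * p.1) : ℂ) / 2
  else
    -(p.2 : ℂ) / 2 + (δ : ℂ) * Complex.I * (Real.sqrt (4 * p.1 - p.2 ^ 2) : ℂ) / 2

/-!
Writing `D = a₁² - 4a₀`, both roots have the form `(-a₁ ± s(D)) / 2`, where `s` is the square root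
on the real line that takes the branch `ε √x` for `x ≥ 0` and `δ i √(-x)` for `x < 0`. The two
branches both vanish at `0`, so `s` is continuous, and `s(x)² = x` since `ε² = δ² = 1`. Negating
both signs negates `s`, which exchanges the two roots.
-/

theorem sq_add_mul_add_eq_mul_of_discrim_eq_sq {K : Type*} [Field K] [NeZero (2 : K)] {b c s : K}
    (hs : discrim 1 b c = s ^ 2) (x : K) :
    x ^ 2 + b * x + c = (x - (-b + s) / 2) * (x - (-b - s) / 2) := by
  have h2 : (2 : K) ≠ 0 := NeZero.ne 2
  rw [discrim] at hs
  field_simp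
  linear_combination -hs

/-- The complex square root on the real line with branch `ε √x` on `x ≥ 0` and `δ i √(-x)` on
`x ≤ 0`. The sum encodes the case distinction because `Real.sqrt` is `0` on negative numbers. -/
noncomputable def signedSqrt (ε δ x : ℝ) : ℂ :=
  ε * √x + δ * Complex.I * √(-x)

theorem signedSqrt_of_nonneg (ε δ : ℝ) {x : ℝ} (hx : 0 ≤ x) : signedSqrt ε δ x = ε * √x := by
  simp [signedSqrt, Real.sqrt_eq_zero_of_nonpos (neg_nonpos.mpr hx)]

theorem signedSqrt_of_nonpos (ε δ : ℝ) {x : ℝ} (hx : x ≤ 0) :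
    signedSqrt ε δ x = δ * Complex.I * √(-x) := by
  simp [signedSqrt, Real.sqrt_eq_zero_of_nonpos hx]

theorem continuous_signedSqrt (ε δ : ℝ) : Continuous (signedSqrt ε δ) := by
  unfold signedSqrt
  fun_prop

theorem signedSqrt_neg_neg (ε δ x : ℝ) : signedSqrt (-ε) (-δ) x = -signedSqrt ε δ x := by
  simp only [signedSqrt, Complex.ofReal_neg]
  ring

theorem signedSqrt_sq {ε δ : ℝ} (hε : ε ^ 2 = 1) (hδ : δ ^ 2 = 1) (x : ℝ) :
    signedSqrt ε δ x ^ 2 = x := by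
  rcases le_total 0 x with hx | hx
  · rw [signedSqrt_of_nonneg ε δ hx]
    norm_cast
    rw [mul_pow, hε, one_mul, Real.sq_sqrt hx]
  · rw [signedSqrt_of_nonpos ε δ hx, mul_pow, mul_pow, Complex.I_sq]
    norm_cast
    rw [hδ, Real.sq_sqrt (neg_nonneg.mpr hx)]
    simp

theorem rQuad_eq_signedSqrt (ε δ : ℝ) (p : ℝ × ℝ) :
    rQuad ε δ p = (-p.2 + signedSqrt ε δ (discrim 1 p.2 p.1)) / 2 := by
  have hD : discrim 1 p.2 p.1 = p.2 ^ 2 - 4 * p.1 := by rw [discrim, mul_one]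
  rw [rQuad, hD, add_div]
  split_ifs with h
  · rw [signedSqrt_of_nonneg ε δ h]
  · rw [signedSqrt_of_nonpos ε δ (not_le.mp h).le, neg_sub]

theorem rQuad_neg_neg_eq_signedSqrt (ε δ : ℝ) (p : ℝ × ℝ) :
    rQuad (-ε) (-δ) p = (-p.2 - signedSqrt ε δ (discrim 1 p.2 p.1)) / 2 := by
  rw [rQuad_eq_signedSqrt, signedSqrt_neg_neg, ← sub_eq_add_neg]

theorem continuous_rQuad (ε δ : ℝ) : Continuous (rQuad ε δ) := by
  simp only [funext (rQuad_eq_signedSqrt ε δ), discrim]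
  have hs := continuous_signedSqrt ε δ
  fun_prop

theorem sq_add_mul_add_eq_mul_rQuad {ε δ : ℝ} (hε : ε ^ 2 = 1) (hδ : δ ^ 2 = 1)
    (a₀ a₁ : ℝ) (z : ℂ) :
    z ^ 2 + a₁ * z + a₀ = (z - rQuad ε δ (a₀, a₁)) * (z - rQuad (-ε) (-δ) (a₀, a₁)) := by
  have hs : discrim 1 (a₁ : ℂ) a₀ = signedSqrt ε δ (discrim 1 a₁ a₀) ^ 2 := by
    rw [signedSqrt_sq hε hδ]
    simp [discrim]
  rw [rQuad_eq_signedSqrt, rQuad_neg_neg_eq_signedSqrt]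
  exact sq_add_mul_add_eq_mul_of_discrim_eq_sq hs z

/-- For any signs `ε, δ ∈ {−1, +1}`, the pair `(r_{ε,δ}, r_{−ε,−δ})` is a complete set of
continuous roots of the family of monic real quadratics. -/
theorem rQuad_complete_set_of_continuous_roots (ε δ : ℝ)
    (hε : ε = -1 ∨ ε = 1) (hδ : δ = -1 ∨ δ = 1) :
    Continuous (rQuad ε δ) ∧ Continuous (rQuad (-ε) (-δ)) ∧
      ∀ a₀ a₁ : ℝ, ∀ z : ℂ,
        z ^ 2 + (a₁ : ℂ) * z + (a₀ : ℂ) =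
          (z - rQuad ε δ (a₀, a₁)) * (z - rQuad (-ε) (-δ) (a₀, a₁)) := by
  exact ⟨continuous_rQuad ε δ, continuous_rQuad (-ε) (-δ),
    sq_add_mul_add_eq_mul_rQuad (sq_eq_one_iff.mpr hε.symm) (sq_eq_one_iff.mpr hδ.symm)⟩
end

section
/- Let n ≥ 1 be a natural number and D_a ⊆ ℂⁿ a nonempty compact set such that for every (a₀, …, a_{n−1}) ∈ D_a, every root λ of the polynomial zⁿ + a_{n−1}z^{n−1} + … + a₁z + a₀ satisfies Re λ < 0. Then there exists κ > 0 such that for every (a₀, …, a_{n−1}) ∈ D_a and every root λ of zⁿ + a_{n−1}z^{n−1} + … + a₁z + a₀, one has Re λ ≤ −κ. -/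
/-!
The pairs `(a, z)` with `a` in a compact set `D` of coefficient vectors and `z` a root of the monic
polynomial with coefficients `a` form a closed set, which is bounded by Cauchy's bound
`‖z‖ ≤ ‖a‖ + 1`. Hence it is compact, and so is its projection, the set of all roots. A continuous
function that is negative on a compact set is bounded away from zero there.
-/

open Polynomial

section Semiring

variable {R : Type*} [Semiring R] {n : ℕ}

/-- The monic polynomial `Xⁿ + a_{n-1} X^{n-1} + ⋯ + a₀`, parametrized by the vector of its
coefficients below the leading one, so that a family of monic polynomials of degree `n` is a subset
of `Fin n → R` and inherits its topology. -/
noncomputable def monicOfCoeffs (a : Fin n → R) : R[X] :=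
  X ^ n + ∑ i : Fin n, C (a i) * X ^ (i : ℕ)

lemma monic_monicOfCoeffs (a : Fin n → R) : (monicOfCoeffs a).Monic :=
  monic_X_pow_add (degree_sum_fin_lt a)

lemma natDegree_monicOfCoeffs [Nontrivial R] (a : Fin n → R) :
    (monicOfCoeffs a).natDegree = n := by
  have degree_lt : (∑ i : Fin n, C (a i) * X ^ (i : ℕ)).degree < (X ^ n : R[X]).degree := by
    rw [degree_X_pow]
    exact degree_sum_fin_lt a
  rw [monicOfCoeffs, natDegree_add_eq_left_of_degree_lt degree_lt, natDegree_X_pow]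

lemma coeff_monicOfCoeffs (a : Fin n → R) (i : Fin n) : (monicOfCoeffs a).coeff i = a i := by
  simp [monicOfCoeffs, coeff_X_pow, i.isLt.ne, Fin.val_inj]

lemma eval_monicOfCoeffs (a : Fin n → R) (z : R) :
    (monicOfCoeffs a).eval z = z ^ n + ∑ i : Fin n, a i * z ^ (i : ℕ) := by
  simp [monicOfCoeffs, eval_finsetSum, eval_X_pow]

lemma isClosed_setOf_isRoot_monicOfCoeffs [TopologicalSpace R] [IsTopologicalSemiring R]
    [T1Space R] : IsClosed {p : (Fin n → R) × R | (monicOfCoeffs p.1).IsRoot p.2} := by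
  have continuous_eval : Continuous fun p : (Fin n → R) × R ↦ (monicOfCoeffs p.1).eval p.2 := by
    simp only [eval_monicOfCoeffs]
    fun_prop
  exact isClosed_singleton.preimage continuous_eval

end Semiring

section NormedField

variable {K : Type*} [NormedField K] {n : ℕ}

lemma cauchyBound_monicOfCoeffs_le (a : Fin n → K) :
    (monicOfCoeffs a).cauchyBound ≤ ‖a‖₊ + 1 := by
  rw [cauchyBound, (monic_monicOfCoeffs a).leadingCoeff, nnnorm_one, div_one,
    natDegree_monicOfCoeffs]
  gcongr
  refine Finset.sup_le fun i hi ↦ ?_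
  lift i to Fin n using Finset.mem_range.mp hi
  rw [coeff_monicOfCoeffs]
  exact nnnorm_le_pi_nnnorm a i

lemma norm_le_of_isRoot_monicOfCoeffs {a : Fin n → K} {z : K}
    (hz : (monicOfCoeffs a).IsRoot z) : ‖z‖ ≤ ‖a‖ + 1 :=
  (hz.norm_lt_cauchyBound (monic_monicOfCoeffs a).ne_zero).le.trans
    (cauchyBound_monicOfCoeffs_le a)

lemma isCompact_setOf_isRoot_monicOfCoeffs [ProperSpace K] {D : Set (Fin n → K)}
    (hD : IsCompact D) :
    IsCompact {z : K | ∃ a ∈ D, (monicOfCoeffs a).IsRoot z} := by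
  obtain ⟨M, hM⟩ := hD.isBounded.exists_norm_le
  have isCompact_pairs : IsCompact ((D ×ˢ Metric.closedBall (0 : K) (M + 1)) ∩
      {p | (monicOfCoeffs p.1).IsRoot p.2}) :=
    (hD.prod (isCompact_closedBall _ _)).inter_right isClosed_setOf_isRoot_monicOfCoeffs
  convert isCompact_pairs.image continuous_snd using 1
  ext z
  constructor
  · rintro ⟨a, ha, hz⟩
    have norm_le : ‖z‖ ≤ M + 1 := (norm_le_of_isRoot_monicOfCoeffs hz).trans (by grw [hM a ha])
    exact ⟨(a, z), ⟨⟨ha, mem_closedBall_zero_iff.mpr norm_le⟩, hz⟩, rfl⟩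
  · rintro ⟨⟨a, _⟩, ⟨⟨ha, -⟩, hz⟩, rfl⟩
    exact ⟨a, ha, hz⟩

end NormedField

/-- If `D_a ⊆ ℂⁿ` (`n ≥ 1`) is a nonempty compact set such that every root of
`zⁿ + a_{n−1}z^{n−1} + … + a₀` has negative real part for every `(a₀, …, a_{n−1}) ∈ D_a`,
then there is `κ > 0` such that every such root `λ` satisfies `Re λ ≤ −κ`. -/
theorem exists_uniform_negative_bound_on_root_re (n : ℕ) (hn : 1 ≤ n)
    (Da : Set (Fin n → ℂ)) (hne : Da.Nonempty) (hc : IsCompact Da)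
    (hneg : ∀ a ∈ Da, ∀ l : ℂ, l ^ n + ∑ i : Fin n, a i * l ^ (i : ℕ) = 0 → l.re < 0) :
    ∃ κ : ℝ, 0 < κ ∧
      ∀ a ∈ Da, ∀ l : ℂ, l ^ n + ∑ i : Fin n, a i * l ^ (i : ℕ) = 0 → l.re ≤ -κ := by
  simp only [← eval_monicOfCoeffs] at hneg ⊢
  obtain ⟨κ, hκ, le_neg_re⟩ :=
    (isCompact_setOf_isRoot_monicOfCoeffs hc).exists_forall_le' (f := fun z ↦ -z.re)
      (by fun_prop) (fun z ⟨a, ha, hz⟩ ↦ neg_pos.mpr (hneg a ha z hz))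
  exact ⟨κ, hκ, fun a ha z hz ↦ le_neg.mp (le_neg_re z ⟨a, ha, hz⟩)⟩
end

section
/- Let M₁ = {(x, y) ∈ ℝ² : x² + (y − 1)² = 1} and M₂ = {(x, y) ∈ ℝ² : x² + (y + 1)² = 1} be the circles of radius 1 centered at (0, 1) and (0, −1), and set M = M₁ ∪ M₂. If K ⊆ M is a set containing at least one point of M₁ and at least one point of M₂, then the set (ℝ² \ M) ∪ K is path-connected. -/
/-!
Every point of `(ℝ² \ M) ∪ K` lying outside both open disks escapes to infinity inside the set: the
line joining the centers has a normal direction `v`, and moving along `v` or `-v` (whichever points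
away from the line) strictly increases the distance to both centers at once. A point inside a disk
goes straight to the given point of `K` on the bounding circle, and escapes from there. Near
infinity any two points can be joined because the complement of a closed ball is path-connected. The
argument works in any real inner product space of dimension at least two, for a bounded family of
balls with disjoint interiors and centers on a common affine hyperplane.
-/

open Metric Set

section Topology

variable {X : Type*} [TopologicalSpace X] {F S : Set X}

theorem isPathConnected_of_forall_exists_joinedIn (hF : IsPathConnected F) (hFS : F ⊆ S)
    (hS : ∀ x ∈ S, ∃ y ∈ F, JoinedIn S x y) : IsPathConnected S := by
  obtain ⟨base, hbase, hjoin⟩ := hF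
  refine ⟨base, hFS hbase, fun {x} hx ↦ ?_⟩
  obtain ⟨y, hy, hxy⟩ := hS x hx
  exact ((hjoin hy).mono hFS).trans hxy.symm

end Topology

section MetricSpace

variable {X ι : Type*} [PseudoMetricSpace X] {c : ι → X} {r : ι → ℝ} {p : X}

theorem ball_subset_compl_iUnion_sphere
    (hsep : Pairwise fun i j ↦ r i + r j ≤ dist (c i) (c j)) (i : ι) :
    ball (c i) (r i) ⊆ (⋃ j, sphere (c j) (r j))ᶜ := by
  rw [subset_compl_iff_disjoint_right, disjoint_iUnion_right]
  intro j
  rcases eq_or_ne i j with rfl | hij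
  · exact sphere_disjoint_ball.symm
  · exact (ball_disjoint_closedBall (hsep hij)).mono_right sphere_subset_closedBall

theorem le_dist_of_mem_sphere
    (hsep : Pairwise fun i j ↦ r i + r j ≤ dist (c i) (c j)) {i : ι}
    (hp : p ∈ sphere (c i) (r i)) (j : ι) : r j ≤ dist p (c j) := by
  rcases eq_or_ne i j with rfl | hij
  · exact (mem_sphere.1 hp).ge
  · have hdisj := closedBall_disjoint_ball (hsep hij)
    exact not_lt.1 fun hlt ↦
      disjoint_left.1 hdisj (sphere_subset_closedBall hp) (mem_ball.2 hlt)

end MetricSpace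

section TopologicalVectorSpace

variable {E : Type*} [AddCommGroup E] [Module ℝ E] [TopologicalSpace E] [IsTopologicalAddGroup E]
  [ContinuousSMul ℝ E]

theorem joinedIn_insert_of_mem_closure {s : Set E} (hs : Convex ℝ s) (hso : IsOpen s) {x y : E}
    (hx : x ∈ closure s) (hy : y ∈ s) : JoinedIn (insert x s) x y := by
  apply JoinedIn.of_segment_subset
  rw [← insert_endpoints_openSegment]
  have hopen : openSegment ℝ x y ⊆ s := by
    simpa only [hso.interior_eq] using
      hs.openSegment_closure_interior_subset_interior hx (hso.interior_eq.symm ▸ hy)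
  exact insert_subset_insert (insert_subset hy hopen)

end TopologicalVectorSpace

section NormedSpace

variable {E : Type*} [NormedAddCommGroup E] [NormedSpace ℝ E]

theorem compl_closedBall_eq_image_prod (c : E) {r : ℝ} (hr : 0 ≤ r) :
    (closedBall c r)ᶜ = (fun q : ℝ × E ↦ c + q.1 • q.2) '' (Ioi r ×ˢ sphere 0 1) := by
  ext x
  simp only [mem_compl_iff, mem_closedBall, not_le, dist_eq_norm]
  constructor
  · intro hx
    have hnorm : ‖x - c‖ ≠ 0 := (hr.trans_lt hx).ne'
    refine ⟨(‖x - c‖, ‖x - c‖⁻¹ • (x - c)), ⟨hx, ?_⟩, ?_⟩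
    · simp [norm_smul, hnorm]
    · simp [smul_inv_smul₀ hnorm]
  · rintro ⟨⟨t, u⟩, ⟨ht : r < t, hu⟩, rfl⟩
    rw [mem_sphere_zero_iff_norm] at hu
    simpa [norm_smul, hu] using ht.trans_le (le_abs_self t)

theorem isPathConnected_compl_closedBall (hdim : 1 < Module.rank ℝ E) (c : E) {r : ℝ}
    (hr : 0 ≤ r) : IsPathConnected (closedBall c r)ᶜ := by
  rw [compl_closedBall_eq_image_prod c hr]
  have hIoi : IsPathConnected (Ioi r) := (convex_Ioi r).isPathConnected nonempty_Ioi
  exact (hIoi.prod (isPathConnected_sphere hdim 0 zero_le_one)).image (by fun_prop)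

theorem exists_pos_lt_norm_add_smul (p : E) {v : E} (hv : v ≠ 0) (R : ℝ) :
    ∃ t : ℝ, 0 < t ∧ R < ‖p + t • v‖ := by
  have hv' : 0 < ‖v‖ := norm_pos_iff.2 hv
  obtain ⟨t, ht⟩ := exists_gt (max 0 ((R + ‖p‖) / ‖v‖))
  obtain ⟨htpos, htlarge⟩ := max_lt_iff.1 ht
  refine ⟨t, htpos, ?_⟩
  calc R < t * ‖v‖ - ‖p‖ := lt_sub_iff_add_lt.2 ((div_lt_iff₀ hv').1 htlarge)
    _ = ‖t • v‖ - ‖p‖ := by rw [norm_smul, Real.norm_of_nonneg htpos.le]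
    _ ≤ ‖p + t • v‖ := by simpa [add_comm] using norm_sub_le_norm_add (t • v) p

theorem joinedIn_of_mem_ball_of_mem_sphere {ι : Type*} {c : ι → E} {r : ι → ℝ} {S : Set E}
    (hsep : Pairwise fun i j ↦ r i + r j ≤ dist (c i) (c j))
    (hS : (⋃ i, sphere (c i) (r i))ᶜ ⊆ S) {i : ι} {p z : E}
    (hp : p ∈ ball (c i) (r i)) (hzS : z ∈ S) (hz : z ∈ sphere (c i) (r i)) : JoinedIn S p z := by
  have hball : insert z (ball (c i) (r i)) ⊆ S :=
    insert_subset hzS ((ball_subset_compl_iUnion_sphere hsep i).trans hS)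
  have hclosure : z ∈ closure (ball (c i) (r i)) := by
    rw [closure_ball _ (pos_of_mem_ball hp).ne']
    exact sphere_subset_closedBall hz
  exact ((joinedIn_insert_of_mem_closure (convex_ball _ _) isOpen_ball hclosure hp).mono hball).symm

end NormedSpace

section InnerProductSpace

variable {E : Type*} [NormedAddCommGroup E] [InnerProductSpace ℝ E]

theorem exists_ne_zero_inner_eq_zero (hdim : 1 < Module.rank ℝ E) (x : E) :
    ∃ v : E, v ≠ 0 ∧ inner ℝ x v = 0 := by
  have hspan : Submodule.span ℝ {x} ≠ ⊤ := by
    intro htop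
    have hle := rank_span_le (R := ℝ) ({x} : Set E)
    rw [htop, rank_top, Cardinal.mk_singleton] at hle
    exact hle.not_gt hdim
  obtain ⟨v, hv, hv0⟩ :=
    Submodule.exists_mem_ne_zero_of_ne_bot (mt Submodule.orthogonal_eq_bot_iff.1 hspan)
  exact ⟨v, hv0, Submodule.mem_orthogonal_singleton_iff_inner_right.1 hv⟩

theorem norm_lt_norm_add_of_inner_nonneg {x v : E} (hxv : 0 ≤ inner ℝ x v) (hv : v ≠ 0) :
    ‖x‖ < ‖x + v‖ := by
  have hv' : 0 < ‖v‖ := norm_pos_iff.2 hv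
  refine lt_of_pow_lt_pow_left₀ 2 (norm_nonneg _) ?_
  rw [norm_add_sq_real]
  linarith [pow_pos hv' 2]

variable {ι : Type*} {c : ι → E} {r : ι → ℝ} {S : Set E} {p v : E}

theorem joinedIn_add_of_inner_nonneg (hS : (⋃ i, sphere (c i) (r i))ᶜ ⊆ S) (hp : p ∈ S)
    (hout : ∀ i, r i ≤ dist p (c i)) (hv : v ≠ 0) (hinner : ∀ i, 0 ≤ inner ℝ (p - c i) v) :
    JoinedIn S p (p + v) := by
  apply JoinedIn.of_segment_subset
  rw [segment_eq_image']
  rintro _ ⟨t, ⟨ht0, -⟩, rfl⟩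
  rw [add_sub_cancel_left]
  rcases ht0.eq_or_lt with rfl | htpos
  · simpa using hp
  · refine hS fun hmem ↦ ?_
    obtain ⟨i, hi⟩ := mem_iUnion.1 hmem
    have hmove : ‖p - c i‖ < ‖p - c i + t • v‖ := by
      refine norm_lt_norm_add_of_inner_nonneg ?_ (smul_ne_zero htpos.ne' hv)
      rw [real_inner_smul_right]
      exact mul_nonneg ht0 (hinner i)
    have hdist : dist p (c i) < dist (p + t • v) (c i) := by
      rwa [dist_eq_norm, dist_eq_norm, add_sub_right_comm]
    exact ((hout i).trans_lt hdist).ne' hi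

theorem exists_joinedIn_lt_norm (hS : (⋃ i, sphere (c i) (r i))ᶜ ⊆ S) (hp : p ∈ S)
    (hout : ∀ i, r i ≤ dist p (c i)) (hv : v ≠ 0) {a : ℝ} (hc : ∀ i, inner ℝ (c i) v = a) (R : ℝ) :
    ∃ q, R < ‖q‖ ∧ JoinedIn S p q := by
  wlog ha : a ≤ inner ℝ p v generalizing v a
  · refine this (neg_ne_zero.2 hv) (a := -a) (by simp [hc]) ?_
    rw [inner_neg_right]
    exact neg_le_neg (le_of_not_ge ha)
  obtain ⟨t, htpos, hlarge⟩ := exists_pos_lt_norm_add_smul p hv R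
  refine ⟨p + t • v, hlarge,
    joinedIn_add_of_inner_nonneg hS hp hout (smul_ne_zero htpos.ne' hv) fun i ↦ ?_⟩
  rw [real_inner_smul_right, inner_sub_left, hc]
  exact mul_nonneg htpos.le (sub_nonneg.2 ha)

theorem isPathConnected_of_compl_iUnion_sphere_subset (hdim : 1 < Module.rank ℝ E)
    (hsep : Pairwise fun i j ↦ r i + r j ≤ dist (c i) (c j))
    (hbdd : Bornology.IsBounded (⋃ i, sphere (c i) (r i)))
    (hv : v ≠ 0) {a : ℝ} (hc : ∀ i, inner ℝ (c i) v = a)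
    (hS : (⋃ i, sphere (c i) (r i))ᶜ ⊆ S) (hmeet : ∀ i, (S ∩ sphere (c i) (r i)).Nonempty) :
    IsPathConnected S := by
  obtain ⟨R, hR, hsub⟩ := hbdd.subset_closedBall_lt 0 0
  refine isPathConnected_of_forall_exists_joinedIn (isPathConnected_compl_closedBall hdim 0 hR.le)
    ((compl_subset_compl.2 hsub).trans hS) fun p hp ↦ ?_
  have escape : ∀ q ∈ S, (∀ i, r i ≤ dist q (c i)) →
      ∃ y ∈ (closedBall (0 : E) R)ᶜ, JoinedIn S q y := by
    intro q hq hout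
    simpa using exists_joinedIn_lt_norm hS hq hout hv hc R
  by_cases hin : ∃ i, p ∈ ball (c i) (r i)
  · obtain ⟨i, hi⟩ := hin
    obtain ⟨z, hzS, hz⟩ := hmeet i
    obtain ⟨y, hy, hzy⟩ := escape z hzS (le_dist_of_mem_sphere hsep hz)
    exact ⟨y, hy, (joinedIn_of_mem_ball_of_mem_sphere hsep hS hi hzS hz).trans hzy⟩
  · exact escape p hp fun i ↦ not_lt.1 fun hlt ↦ hin ⟨i, hlt⟩

theorem pathConnected_compl_two_circles_union_general (hdim : 1 < Module.rank ℝ E) {c₁ c₂ : E}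
    {r₁ r₂ : ℝ} (hsep : r₁ + r₂ ≤ dist c₁ c₂) {K : Set E} (h₁ : (K ∩ sphere c₁ r₁).Nonempty)
    (h₂ : (K ∩ sphere c₂ r₂).Nonempty) :
    IsPathConnected ((sphere c₁ r₁ ∪ sphere c₂ r₂)ᶜ ∪ K) := by
  obtain ⟨v, hv, horth⟩ := exists_ne_zero_inner_eq_zero hdim (c₁ - c₂)
  rw [inner_sub_left, sub_eq_zero] at horth
  have hunion : ⋃ b, sphere (cond b c₁ c₂) (cond b r₁ r₂) = sphere c₁ r₁ ∪ sphere c₂ r₂ := by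
    rw [union_eq_iUnion]
    exact iUnion_congr (Bool.forall_bool.2 ⟨rfl, rfl⟩)
  refine isPathConnected_of_compl_iUnion_sphere_subset
    (c := fun b ↦ cond b c₁ c₂) (r := fun b ↦ cond b r₁ r₂) hdim ?_ ?_ hv
    (Bool.forall_bool.2 ⟨horth.symm, rfl⟩) ?_ (Bool.forall_bool.2 ⟨?_, ?_⟩)
  · rintro (_ | _) (_ | _) hne
    · exact absurd rfl hne
    · simpa only [cond_true, cond_false, add_comm, dist_comm] using hsep
    · exact hsep
    · exact absurd rfl hne
  · exact hunion ▸ isBounded_sphere.union isBounded_sphere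
  · exact hunion ▸ subset_union_left
  · exact h₂.mono (inter_subset_inter_left _ subset_union_right)
  · exact h₁.mono (inter_subset_inter_left _ subset_union_right)

end InnerProductSpace

theorem equivRealProdCLM_preimage_circle (c : ℝ × ℝ) {r : ℝ} (hr : 0 ≤ r) :
    Complex.equivRealProdCLM ⁻¹' {p | (p.1 - c.1) ^ 2 + (p.2 - c.2) ^ 2 = r ^ 2} =
      sphere (Complex.mk c.1 c.2) r := by
  ext z
  rw [mem_sphere, Complex.dist_eq_re_im, Real.sqrt_eq_iff_eq_sq (by positivity) hr]
  rfl

theorem isPathConnected_compl_plane_circles_union {c₁ c₂ : ℝ × ℝ} {r₁ r₂ : ℝ} (hr₁ : 0 ≤ r₁)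
    (hr₂ : 0 ≤ r₂) (hsep : (r₁ + r₂) ^ 2 ≤ (c₁.1 - c₂.1) ^ 2 + (c₁.2 - c₂.2) ^ 2)
    {K : Set (ℝ × ℝ)}
    (h₁ : ∃ z ∈ K, z ∈ {p : ℝ × ℝ | (p.1 - c₁.1) ^ 2 + (p.2 - c₁.2) ^ 2 = r₁ ^ 2})
    (h₂ : ∃ z ∈ K, z ∈ {p : ℝ × ℝ | (p.1 - c₂.1) ^ 2 + (p.2 - c₂.2) ^ 2 = r₂ ^ 2}) :
    IsPathConnected (({p : ℝ × ℝ | (p.1 - c₁.1) ^ 2 + (p.2 - c₁.2) ^ 2 = r₁ ^ 2} ∪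
      {p : ℝ × ℝ | (p.1 - c₂.1) ^ 2 + (p.2 - c₂.2) ^ 2 = r₂ ^ 2})ᶜ ∪ K) := by
  let e := Complex.equivRealProdCLM
  have hdim : 1 < Module.rank ℝ ℂ := by simp
  have hdist : r₁ + r₂ ≤ dist (Complex.mk c₁.1 c₁.2) (Complex.mk c₂.1 c₂.2) := by
    rw [Complex.dist_eq_re_im]
    exact Real.le_sqrt_of_sq_le hsep
  rw [← e.toHomeomorph.isPathConnected_preimage, ContinuousLinearEquiv.coe_toHomeomorph,
    preimage_union, preimage_compl, preimage_union,
    equivRealProdCLM_preimage_circle c₁ hr₁, equivRealProdCLM_preimage_circle c₂ hr₂]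
  refine pathConnected_compl_two_circles_union_general hdim hdist ?_ ?_
  · rw [← equivRealProdCLM_preimage_circle c₁ hr₁]
    exact Set.Nonempty.preimage h₁ e.surjective
  · rw [← equivRealProdCLM_preimage_circle c₂ hr₂]
    exact Set.Nonempty.preimage h₂ e.surjective

/-- Let `M₁` and `M₂` be the unit circles centered at `(0, 1)` and `(0, −1)`, and
`M = M₁ ∪ M₂`. If `K ⊆ M` contains a point of `M₁` and a point of `M₂`, then
`(ℝ² \ M) ∪ K` is path-connected. -/
theorem pathConnected_compl_two_circles_union (K : Set (ℝ × ℝ))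
    (hK : K ⊆ {p : ℝ × ℝ | p.1 ^ 2 + (p.2 - 1) ^ 2 = 1} ∪
      {p : ℝ × ℝ | p.1 ^ 2 + (p.2 + 1) ^ 2 = 1})
    (h1 : ∃ z ∈ K, z ∈ {p : ℝ × ℝ | p.1 ^ 2 + (p.2 - 1) ^ 2 = 1})
    (h2 : ∃ z ∈ K, z ∈ {p : ℝ × ℝ | p.1 ^ 2 + (p.2 + 1) ^ 2 = 1}) :
    IsPathConnected (({p : ℝ × ℝ | p.1 ^ 2 + (p.2 - 1) ^ 2 = 1} ∪
      {p : ℝ × ℝ | p.1 ^ 2 + (p.2 + 1) ^ 2 = 1})ᶜ ∪ K) := by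
  simpa using isPathConnected_compl_plane_circles_union (c₁ := (0, 1)) (c₂ := (0, -1))
    (r₁ := 1) (r₂ := 1) zero_le_one zero_le_one (by norm_num) (by simpa using h1)
    (by simpa using h2)
end
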